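/- Let R_ko = ℤ₂[η, A, B]/(2η, η³, ηA, A² − 4B). Then B is a nonzerodivisor on R_ko (equivalently, H⁰_{(B)}(R_ko) = 0), and the cokernel of the localization map R_ko → (R_ko)_B inverting B is isomorphic as a ℤ₂[B]-module to (ℤ₂[B, B⁻¹]/ℤ₂[B])^{⊕2} ⊕ ((ℤ/2)[B, B⁻¹]/(ℤ/2)[B])^{⊕2}, the two pairs of summands being generated by the images of 1/B, A/B and η/B, η²/B respectively. -/

import Mathlib

open MvPolynomial

noncomputable section

/-- The ideal of relations defining `π_*(ko) = ℤ₂[η, A, B]/(2η, η³, ηA, A² − 4B)`. -/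
def koRel : Ideal (MvPolynomial (Fin 3) ℤ_[2]) :=
  Ideal.span {2 * X 0, X 0 ^ 3, X 0 * X 1, X 1 ^ 2 - 4 * X 2}

/-- `R_ko = ℤ₂[η, A, B]/(2η, η³, ηA, A² − 4B)`, the homotopy ring of 2-complete
connective real K-theory. -/
abbrev Rko : Type _ := MvPolynomial (Fin 3) ℤ_[2] ⧸ koRel

/-- The class `η ∈ R_ko`. -/
def koEta : Rko := Ideal.Quotient.mk koRel (X 0)

/-- The class `A ∈ R_ko`. -/
def koA : Rko := Ideal.Quotient.mk koRel (X 1)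

/-- The class `B ∈ R_ko` (the Bott element). -/
def koB : Rko := Ideal.Quotient.mk koRel (X 2)

/-- `R_ko` as a module over `ℤ₂[B] = Polynomial ℤ_[2]`, with `B` acting as
multiplication by the Bott element. -/
instance : Module (Polynomial ℤ_[2]) Rko :=
  Module.compHom Rko (Polynomial.aeval koB).toRingHom

/-- `(ℤ/2)[B]` as a module over `ℤ₂[B]`, via reduction of the coefficients mod 2. -/
instance : Module (Polynomial ℤ_[2]) (Polynomial (ZMod 2)) :=
  Module.compHom _ (Polynomial.mapRingHom PadicInt.toZMod)


/-- The localization of `M` away from `x`. -/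
abbrev Loc {R : Type*} [CommRing R] (x : R) (M : Type*) [AddCommGroup M] [Module R M] :=
  LocalizedModule (Submonoid.powers x) M

/-- The canonical localization map `M → M_x`. -/
abbrev locMap {R : Type*} [CommRing R] (x : R) (M : Type*) [AddCommGroup M] [Module R M] :
    M →ₗ[R] Loc x M :=
  LocalizedModule.mkLinearMap (Submonoid.powers x) M

/-- The cokernel `M/x^∞` of the localization map `M → M_x`. -/
abbrev CokLoc {R : Type*} [CommRing R] (x : R) (M : Type*) [AddCommGroup M] [Module R M] :=
  Loc x M ⧸ LinearMap.range (locMap x M)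

/-- `ℤ₂[B, B⁻¹]/ℤ₂[B]`, the cokernel of the inclusion of `ℤ₂[B]` into the
Laurent polynomial ring, as a `ℤ₂[B]`-module. -/
abbrev QZ : Type _ :=
  LaurentPolynomial ℤ_[2] ⧸
    LinearMap.range (Algebra.linearMap (Polynomial ℤ_[2]) (LaurentPolynomial ℤ_[2]))

/-- `(ℤ/2)[B, B⁻¹]/(ℤ/2)[B]`, the cokernel of the inclusion of `(ℤ/2)[B]` into the
Laurent polynomial ring. -/
abbrev Qmod : Type _ :=
  LaurentPolynomial (ZMod 2) ⧸
    LinearMap.range (Algebra.linearMap (Polynomial (ZMod 2)) (LaurentPolynomial (ZMod 2)))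

/-- `(ℤ/2)[B, B⁻¹]/(ℤ/2)[B]` as a `ℤ₂[B]`-module, via reduction of coefficients mod 2. -/
instance : Module (Polynomial ℤ_[2]) Qmod :=
  Module.compHom _ (Polynomial.mapRingHom PadicInt.toZMod)

/-- The cokernel of `R_ko → (R_ko)_B` as a `ℤ₂[B]`-module. -/
instance : Module (Polynomial ℤ_[2]) (CokLoc koB Rko) :=
  Module.compHom _ (Polynomial.aeval koB).toRingHom

/-!
As a `ℤ₂[B]`-module, `R_ko` is `ℤ₂[B]² ⊕ (ℤ/2)[B]²` on the generators `1, A, η, η²`: the relations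
show that they generate and that `η, η²` are killed by `2`, and there are no further relations
because `1, A` remain independent over `ℤ₂[B]` in `R_ko/(η) = ℤ₂[B][A]/(A² − 4B)`, and `1, η, η²`
over `(ℤ/2)[B]` in `R_ko/(2, A) = (ℤ/2)[B][η]/(η³)`. Hence multiplication by `B` is injective. Since
the cokernel of a localization map depends only on the module up to isomorphism, it can be computed
summand by summand, where inverting `B` gives Laurent polynomials.
-/

section LocalizationCokernel

variable {R : Type*} [CommRing R] {M N Q M' N' Q' : Type*}
  [AddCommGroup M] [Module R M] [AddCommGroup N] [Module R N] [AddCommGroup Q] [Module R Q]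
  [AddCommGroup M'] [Module R M'] [AddCommGroup N'] [Module R N'] [AddCommGroup Q'] [Module R Q']

theorem exists_linearEquiv_of_ker_eq_ker {f : M →ₗ[R] N} {g : M →ₗ[R] Q}
    (hf : Function.Surjective f) (hg : Function.Surjective g)
    (hker : LinearMap.ker f = LinearMap.ker g) :
    ∃ E : N ≃ₗ[R] Q, ∀ m, E (f m) = g m := by
  refine ⟨(f.quotKerEquivOfSurjective hf).symm ≪≫ₗ Submodule.quotEquivOfEq _ _ hker ≪≫ₗ
    g.quotKerEquivOfSurjective hg, fun m => ?_⟩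
  have hm : (f.quotKerEquivOfSurjective hf).symm (f m) = Submodule.Quotient.mk m := by
    rw [LinearEquiv.symm_apply_eq, LinearMap.quotKerEquivOfSurjective_apply_mk]
  rw [LinearEquiv.trans_apply, LinearEquiv.trans_apply, hm, Submodule.quotEquivOfEq_mk,
    LinearMap.quotKerEquivOfSurjective_apply_mk]

theorem exact_prodMap {f : M →ₗ[R] N} {g : N →ₗ[R] Q} {f' : M' →ₗ[R] N'} {g' : N' →ₗ[R] Q'}
    (hfg : Function.Exact f g) (hfg' : Function.Exact f' g') :
    Function.Exact (f.prodMap f') (g.prodMap g') := by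
  rintro ⟨n, n'⟩
  simp [hfg n, hfg' n', Prod.ext_iff]

theorem exists_linearEquiv_of_exact_of_isLocalizedModule (S : Submonoid R)
    {f : M →ₗ[R] N} {g : N →ₗ[R] Q} {f' : M' →ₗ[R] N'} {g' : N' →ₗ[R] Q'}
    [IsLocalizedModule S f] [IsLocalizedModule S f']
    (hfg : Function.Exact f g) (hg : Function.Surjective g)
    (hfg' : Function.Exact f' g') (hg' : Function.Surjective g') (e : M ≃ₗ[R] M') :
    ∃ E : Q ≃ₗ[R] Q', ∀ (s : S) (m : M) (n : N) (n' : N'),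
      s • n = f m → s • n' = f' (e m) → E (g n) = g' n' := by
  let L : N ≃ₗ[R] N' := IsLocalizedModule.linearEquiv S f (f' ∘ₗ e.toLinearMap)
  have hL (m : M) : L (f m) = f' (e m) := IsLocalizedModule.linearEquiv_apply S f _ m
  have hker : LinearMap.ker g = LinearMap.ker (g' ∘ₗ L.toLinearMap) := by
    ext n
    rw [LinearMap.mem_ker, LinearMap.mem_ker, hfg n, LinearMap.comp_apply, LinearEquiv.coe_coe,
      hfg' (L n)]
    simp only [Set.mem_range, e.surjective.exists, ← hL, L.injective.eq_iff]
  obtain ⟨E, hE⟩ := exists_linearEquiv_of_ker_eq_ker hg (hg'.comp L.surjective) hker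
  refine ⟨E, fun s m n n' hn hn' => ?_⟩
  have hnn' : L n = n' := IsLocalizedModule.smul_injective f' s <| by
    simp only [Submonoid.smul_def] at hn hn' ⊢
    rw [← map_smul, hn, hL, hn']
  rw [hE, LinearMap.comp_apply, LinearEquiv.coe_coe, hnn']

end LocalizationCokernel

open scoped Polynomial LaurentPolynomial

section PolynomialExtensions

variable {R : Type*} [CommRing R]

theorem root_X_pow_two_sub_C_sq (r : R) :
    AdjoinRoot.root (Polynomial.X ^ 2 - Polynomial.C r) ^ 2 = algebraMap R _ r := by
  rw [← sub_eq_zero, ← AdjoinRoot.mk_X, ← map_pow]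
  exact (map_sub (AdjoinRoot.mk _) _ _).symm.trans AdjoinRoot.mk_self

theorem eq_zero_of_sum_smul_root_pow_eq_zero {q : R[X]} (hq : q.Monic) {n : ℕ}
    (hn : q.natDegree = n) {c : Fin n → R}
    (hc : ∑ i, c i • AdjoinRoot.root q ^ (i : ℕ) = 0) : c = 0 := by
  subst hn
  have hli := (AdjoinRoot.powerBasis' hq).basis.linearIndependent
  refine funext (Fintype.linearIndependent_iff.1 hli c ?_)
  simp only [PowerBasis.coe_basis, AdjoinRoot.powerBasis'_gen]
  exact hc

theorem X_smul_toLaurent_mul_T (p : R[X]) :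
    (Polynomial.X : R[X]) • (p.toLaurent * LaurentPolynomial.T (-1)) = p.toLaurent := by
  rw [Algebra.smul_def, LaurentPolynomial.algebraMap_eq_toLaurent, Polynomial.toLaurent_X,
    mul_left_comm, ← LaurentPolynomial.T_add, add_neg_cancel, LaurentPolynomial.T_zero, mul_one]

end PolynomialExtensions

/-- `R_ko` as a `ℤ₂[B]`-algebra, extending its module structure definitionally. -/
instance : Algebra ℤ_[2][X] Rko where
  algebraMap := (Polynomial.aeval koB).toRingHom
  commutes' _ _ := mul_comm _ _
  smul_def' _ _ := rfl

/-- `(ℤ/2)[B]` as a `ℤ₂[B]`-algebra, extending its module structure definitionally. -/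
instance : Algebra ℤ_[2][X] (ZMod 2)[X] where
  algebraMap := Polynomial.mapRingHom PadicInt.toZMod
  commutes' _ _ := mul_comm _ _
  smul_def' _ _ := rfl

/-- `(ℤ/2)[B, B⁻¹]` as a `ℤ₂[B]`-algebra, via reduction of the coefficients mod 2. -/
instance : Algebra ℤ_[2][X] (ZMod 2)[T;T⁻¹] :=
  Algebra.compHom _ (algebraMap ℤ_[2][X] (ZMod 2)[X])

instance : IsScalarTower ℤ_[2][X] (ZMod 2)[X] (ZMod 2)[T;T⁻¹] :=
  .of_algebraMap_eq fun _ => rfl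

theorem algebraMap_zmod_X : algebraMap ℤ_[2][X] (ZMod 2)[X] Polynomial.X = Polynomial.X :=
  Polynomial.map_X _

theorem algebraMap_zmod_surjective : Function.Surjective (algebraMap ℤ_[2][X] (ZMod 2)[X]) :=
  Polynomial.map_surjective _ (ZMod.ringHom_surjective _)

theorem algebraMap_zmod_eq_zero_iff {p : ℤ_[2][X]} :
    algebraMap ℤ_[2][X] (ZMod 2)[X] p = 0 ↔ 2 ∣ p := by
  have hker : RingHom.ker (algebraMap ℤ_[2][X] (ZMod 2)[X]) = Ideal.span {2} := by
    change RingHom.ker (Polynomial.mapRingHom PadicInt.toZMod) = _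
    rw [Polynomial.ker_mapRingHom, PadicInt.ker_toZMod, PadicInt.maximalIdeal_eq_span_p,
      Ideal.map_span, Set.image_singleton, map_natCast, Nat.cast_ofNat]
  rw [← RingHom.mem_ker, hker, Ideal.mem_span_singleton]

theorem algebraMap_X_eq_koB : algebraMap ℤ_[2][X] Rko Polynomial.X = koB :=
  Polynomial.aeval_X koB

theorem algebraMap_C_eq_mk (a : ℤ_[2]) :
    algebraMap ℤ_[2][X] Rko (Polynomial.C a) = Ideal.Quotient.mk koRel (C a) :=
  Polynomial.aeval_C koB a

theorem two_mul_koEta : 2 * koEta = 0 :=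
  Ideal.Quotient.eq_zero_iff_mem.2 (Ideal.subset_span (by simp))

theorem koEta_pow_three : koEta ^ 3 = 0 :=
  Ideal.Quotient.eq_zero_iff_mem.2 (Ideal.subset_span (by simp))

theorem koEta_mul_koA : koEta * koA = 0 :=
  Ideal.Quotient.eq_zero_iff_mem.2 (Ideal.subset_span (by simp))

theorem koA_sq : koA ^ 2 = 4 * koB :=
  Ideal.Quotient.eq.2 (Ideal.subset_span (by simp))

/-- The universal property of `R_ko` as a `ℤ₂[B]`-algebra. The image of `B` is forced by the
`ℤ₂[B]`-algebra structure of the target, so that only those of `η` and `A` are to be chosen. -/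
def koLift {T : Type*} [CommRing T] [Algebra ℤ_[2][X] T] (η A : T) (two_mul : 2 * η = 0)
    (pow_three : η ^ 3 = 0) (mul_eq : η * A = 0)
    (sq_eq : A ^ 2 = 4 * algebraMap ℤ_[2][X] T Polynomial.X) : Rko →ₐ[ℤ_[2][X]] T :=
  let φ : Rko →+* T := Ideal.Quotient.lift koRel
    (eval₂Hom ((algebraMap ℤ_[2][X] T).comp Polynomial.C)
      ![η, A, algebraMap ℤ_[2][X] T Polynomial.X]) <| by
    suffices koRel ≤ RingHom.ker _ from fun p hp => this hp
    rw [koRel, Ideal.span_le]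
    rintro p (rfl | rfl | rfl | rfl) <;> simp [two_mul, pow_three, mul_eq, sq_eq]
  have hφ : φ.comp (algebraMap ℤ_[2][X] Rko) = algebraMap ℤ_[2][X] T := by
    ext
    · rw [RingHom.comp_apply, RingHom.comp_apply, algebraMap_C_eq_mk]
      exact eval₂_C _ _ _
    · rw [RingHom.comp_apply, algebraMap_X_eq_koB]
      exact eval₂_X _ _ _
  { φ with commutes' := RingHom.congr_fun hφ }

section koLift

variable {T : Type*} [CommRing T] [Algebra ℤ_[2][X] T] {η A : T} (two_mul : 2 * η = 0)
  (pow_three : η ^ 3 = 0) (mul_eq : η * A = 0)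
  (sq_eq : A ^ 2 = 4 * algebraMap ℤ_[2][X] T Polynomial.X)

theorem koLift_koEta : koLift η A two_mul pow_three mul_eq sq_eq koEta = η :=
  eval₂_X ((algebraMap ℤ_[2][X] T).comp Polynomial.C) _ _

theorem koLift_koA : koLift η A two_mul pow_three mul_eq sq_eq koA = A :=
  eval₂_X ((algebraMap ℤ_[2][X] T).comp Polynomial.C) _ _

end koLift

/-- The quotient map onto `R_ko/(η) = ℤ₂[B][A]/(A² − 4B)`. -/
def koModEta : Rko →ₐ[ℤ_[2][X]]
    AdjoinRoot (Polynomial.X ^ 2 - Polynomial.C (4 * Polynomial.X) : ℤ_[2][X][X]) :=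
  koLift 0 (AdjoinRoot.root _) (mul_zero _) (zero_pow three_ne_zero) (zero_mul _) <|
    (root_X_pow_two_sub_C_sq _).trans <| (map_mul _ _ _).trans <| by rw [map_ofNat]

/-- The quotient map onto `R_ko/(2, A) = (ℤ/2)[B][η]/(η³)`. -/
def koModTwoA : Rko →ₐ[ℤ_[2][X]] AdjoinRoot (Polynomial.X ^ 3 : (ZMod 2)[X][X]) :=
  have two_eq_zero : (2 : AdjoinRoot (Polynomial.X ^ 3 : (ZMod 2)[X][X])) = 0 := by
    have h := congrArg (algebraMap (ZMod 2)[X] (AdjoinRoot (Polynomial.X ^ 3 : (ZMod 2)[X][X])))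
      (CharTwo.two_eq_zero : (2 : (ZMod 2)[X]) = 0)
    rwa [map_ofNat, map_zero] at h
  have root_pow_three : AdjoinRoot.root (Polynomial.X ^ 3 : (ZMod 2)[X][X]) ^ 3 = 0 := by
    rw [← AdjoinRoot.mk_X, ← map_pow, AdjoinRoot.mk_self]
  koLift (AdjoinRoot.root _) 0 (by rw [two_eq_zero, zero_mul]) root_pow_three (mul_zero _)
    (by linear_combination -2 * algebraMap ℤ_[2][X] _ Polynomial.X * two_eq_zero)

theorem koModEta_koEta : koModEta koEta = 0 := koLift_koEta ..

theorem koModEta_koA : koModEta koA = AdjoinRoot.root _ := koLift_koA ..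

theorem koModTwoA_koEta : koModTwoA koEta = AdjoinRoot.root _ := by
  rw [koModTwoA, koLift_koEta]

theorem koModTwoA_koA : koModTwoA koA = 0 := by
  rw [koModTwoA, koLift_koA]

/-- The map `((a, b), (c, d)) ↦ a + bA + cη + dη²` presenting `R_ko` as a `ℤ₂[B]`-module. -/
def koCombination : (ℤ_[2][X] × ℤ_[2][X]) × (ℤ_[2][X] × ℤ_[2][X]) →ₗ[ℤ_[2][X]] Rko :=
  ((LinearMap.toSpanSingleton _ _ 1).coprod (LinearMap.toSpanSingleton _ _ koA)).coprod
    ((LinearMap.toSpanSingleton _ _ koEta).coprod (LinearMap.toSpanSingleton _ _ (koEta ^ 2)))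

/-- Reduction mod 2 of the last two coordinates, which are to be the coefficients of the 2-torsion
generators `η` and `η²`. -/
def koReduction : (ℤ_[2][X] × ℤ_[2][X]) × (ℤ_[2][X] × ℤ_[2][X]) →ₗ[ℤ_[2][X]]
    (ℤ_[2][X] × ℤ_[2][X]) × ((ZMod 2)[X] × (ZMod 2)[X]) :=
  LinearMap.id.prodMap ((Algebra.linearMap _ _).prodMap (Algebra.linearMap _ _))

theorem koCombination_apply (a b c d : ℤ_[2][X]) :
    koCombination ((a, b), (c, d)) = a • 1 + b • koA + (c • koEta + d • koEta ^ 2) := rfl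

theorem koReduction_surjective : Function.Surjective koReduction :=
  Function.surjective_id.prodMap (algebraMap_zmod_surjective.prodMap algebraMap_zmod_surjective)

theorem koCombination_surjective : Function.Surjective koCombination := by
  intro r
  obtain ⟨p, rfl⟩ := Ideal.Quotient.mk_surjective r
  induction p using MvPolynomial.induction_on with
  | C x => exact ⟨((Polynomial.C x, 0), (0, 0)), by
      simp [koCombination_apply, ← algebraMap_C_eq_mk, Algebra.smul_def]⟩
  | add p q hp hq =>
    obtain ⟨⟨u, hu⟩, v, hv⟩ := And.intro hp hq
    exact ⟨u + v, by rw [map_add, map_add, hu, hv]⟩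
  | mul_X p i hp =>
    obtain ⟨⟨⟨a, b⟩, c, d⟩, hp⟩ := hp
    rw [map_mul, ← hp]
    simp only [koCombination_apply, Algebra.smul_def]
    fin_cases i
    · refine ⟨((0, 0), (a, c)), ?_⟩
      change _ = _ * koEta
      simp only [koCombination_apply, Algebra.smul_def, map_zero]
      linear_combination -algebraMap _ Rko b * koEta_mul_koA - algebraMap _ Rko d * koEta_pow_three
    · refine ⟨((4 * Polynomial.X * b, a), (0, 0)), ?_⟩
      change _ = _ * koA
      simp only [koCombination_apply, Algebra.smul_def, map_zero, map_mul, map_ofNat,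
        algebraMap_X_eq_koB]
      linear_combination -algebraMap _ Rko b * koA_sq -
        (algebraMap _ Rko c + algebraMap _ Rko d * koEta) * koEta_mul_koA
    · refine ⟨(Polynomial.X : ℤ_[2][X]) • ((a, b), (c, d)), ?_⟩
      change _ = _ * koB
      rw [map_smul]
      simp only [koCombination_apply, Algebra.smul_def, algebraMap_X_eq_koB]
      ring

theorem eq_zero_of_koCombination_eq_zero {a b c d : ℤ_[2][X]}
    (h : koCombination ((a, b), (c, d)) = 0) : a = 0 ∧ b = 0 := by
  have hη : a • 1 + b • koModEta koA = 0 := by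
    simpa [koCombination_apply, koModEta_koEta] using congrArg koModEta h
  rw [koModEta_koA] at hη
  have hab : ![a, b] = 0 := eq_zero_of_sum_smul_root_pow_eq_zero
    (Polynomial.monic_X_pow_sub_C _ two_ne_zero) Polynomial.natDegree_X_pow_sub_C
    (by simpa [Fin.sum_univ_two] using hη)
  exact ⟨congrFun hab 0, congrFun hab 1⟩

theorem two_dvd_of_koCombination_eq_zero {a b c d : ℤ_[2][X]}
    (h : koCombination ((a, b), (c, d)) = 0) : 2 ∣ c ∧ 2 ∣ d := by
  have hA : a • 1 + (c • koModTwoA koEta + d • koModTwoA koEta ^ 2) = 0 := by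
    simpa [koCombination_apply, koModTwoA_koA] using congrArg koModTwoA h
  rw [koModTwoA_koEta] at hA
  have hacd : algebraMap ℤ_[2][X] (ZMod 2)[X] ∘ ![a, c, d] = 0 :=
    eq_zero_of_sum_smul_root_pow_eq_zero (Polynomial.monic_X_pow 3) (Polynomial.natDegree_X_pow 3)
      (by simpa [Fin.sum_univ_three, add_assoc] using hA)
  exact ⟨algebraMap_zmod_eq_zero_iff.1 (congrFun hacd 1),
    algebraMap_zmod_eq_zero_iff.1 (congrFun hacd 2)⟩

theorem ker_koCombination : LinearMap.ker koCombination = LinearMap.ker koReduction := by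
  ext ⟨⟨a, b⟩, c, d⟩
  have mem_ker_koReduction : ((a, b), (c, d)) ∈ LinearMap.ker koReduction ↔
      (a = 0 ∧ b = 0) ∧ (2 ∣ c ∧ 2 ∣ d) := by
    simp [koReduction, Prod.ext_iff, algebraMap_zmod_eq_zero_iff]
  rw [LinearMap.mem_ker, mem_ker_koReduction]
  refine ⟨fun h => ⟨eq_zero_of_koCombination_eq_zero h, two_dvd_of_koCombination_eq_zero h⟩, ?_⟩
  rintro ⟨⟨rfl, rfl⟩, ⟨c, rfl⟩, d, rfl⟩
  simp only [koCombination_apply, Algebra.smul_def, map_mul, map_ofNat, map_zero]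
  linear_combination (algebraMap _ Rko c + algebraMap _ Rko d * koEta) * two_mul_koEta

theorem exists_Rko_linearEquiv :
    ∃ e : Rko ≃ₗ[ℤ_[2][X]] (ℤ_[2][X] × ℤ_[2][X]) × ((ZMod 2)[X] × (ZMod 2)[X]),
      e 1 = ((1, 0), (0, 0)) ∧ e koA = ((0, 1), (0, 0)) ∧
      e koEta = ((0, 0), (1, 0)) ∧ e (koEta ^ 2) = ((0, 0), (0, 1)) := by
  obtain ⟨e, he⟩ := exists_linearEquiv_of_ker_eq_ker koCombination_surjective
    koReduction_surjective ker_koCombination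
  refine ⟨e, ?_, ?_, ?_, ?_⟩
  · simpa [koCombination_apply, koReduction] using he ((1, 0), (0, 0))
  · simpa [koCombination_apply, koReduction] using he ((0, 1), (0, 0))
  · simpa [koCombination_apply, koReduction] using he ((0, 0), (1, 0))
  · simpa [koCombination_apply, koReduction] using he ((0, 0), (0, 1))

theorem koB_mem_nonZeroDivisors : koB ∈ nonZeroDivisors Rko := by
  obtain ⟨e, -⟩ := exists_Rko_linearEquiv
  have hZ : IsSMulRegular ℤ_[2][X] (Polynomial.X : ℤ_[2][X]) :=
    Polynomial.isRegular_X.left.isSMulRegular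
  have hF : IsSMulRegular (ZMod 2)[X] (Polynomial.X : ℤ_[2][X]) := by
    rw [← isSMulRegular_algebraMap_iff (ZMod 2)[X], algebraMap_zmod_X]
    exact Polynomial.isRegular_X.left.isSMulRegular
  have hB : IsSMulRegular Rko koB := by
    rw [← algebraMap_X_eq_koB, isSMulRegular_algebraMap_iff, e.isSMulRegular_congr]
    exact (hZ.prodMap hZ).prodMap (hF.prodMap hF)
  rw [← isRegular_iff_mem_nonZeroDivisors]
  exact isLeftRegular_iff_isRegular.1 hB.isLeftRegular

instance : IsLocalizedModule (.powers (Polynomial.X : ℤ_[2][X]))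
    ((locMap koB Rko).restrictScalars ℤ_[2][X]) :=
  have : IsLocalizedModule (.powers (algebraMap ℤ_[2][X] Rko Polynomial.X)) (locMap koB Rko) := by
    rw [algebraMap_X_eq_koB]
    infer_instance
  .restrictScalars_powers _ _

instance : IsLocalizedModule (.powers (Polynomial.X : ℤ_[2][X]))
    ((Algebra.linearMap (ZMod 2)[X] (ZMod 2)[T;T⁻¹]).restrictScalars ℤ_[2][X]) :=
  have : IsLocalizedModule (.powers (algebraMap ℤ_[2][X] (ZMod 2)[X] Polynomial.X))
      (Algebra.linearMap (ZMod 2)[X] (ZMod 2)[T;T⁻¹]) := by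
    rw [algebraMap_zmod_X]
    infer_instance
  .restrictScalars_powers _ _

instance : IsScalarTower ℤ_[2][X] (ZMod 2)[X] Qmod :=
  .of_algebraMap_smul fun _ _ => rfl

/-- The quotient map `(R_ko)_B → R_ko/B^∞`, linear for the `ℤ₂[B]`-module instance declared
above on its target, which agrees only propositionally with Mathlib's quotient instance. -/
def mkCokLoc : Loc koB Rko →ₗ[ℤ_[2][X]] CokLoc koB Rko where
  toFun := Submodule.Quotient.mk
  map_add' _ _ := rfl
  map_smul' p n := by
    rw [← algebraMap_smul Rko]
    rfl

theorem exact_locMap_mkCokLoc :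
    Function.Exact ((locMap koB Rko).restrictScalars ℤ_[2][X]) mkCokLoc :=
  (locMap koB Rko).exact_map_mkQ_range

theorem mkCokLoc_surjective : Function.Surjective mkCokLoc :=
  Submodule.Quotient.mk_surjective _

/-- The product of the inclusions of polynomials into Laurent polynomials, over `ℤ₂` and `ℤ/2`. -/
def toLaurentProd : (ℤ_[2][X] × ℤ_[2][X]) × ((ZMod 2)[X] × (ZMod 2)[X]) →ₗ[ℤ_[2][X]]
    (ℤ_[2][T;T⁻¹] × ℤ_[2][T;T⁻¹]) × ((ZMod 2)[T;T⁻¹] × (ZMod 2)[T;T⁻¹]) :=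
  let ι₀ := Algebra.linearMap ℤ_[2][X] ℤ_[2][T;T⁻¹]
  let ι₂ := (Algebra.linearMap (ZMod 2)[X] (ZMod 2)[T;T⁻¹]).restrictScalars ℤ_[2][X]
  (ι₀.prodMap ι₀).prodMap (ι₂.prodMap ι₂)

/-- The product of the quotient maps by polynomials, whose kernel is the range of
`toLaurentProd`. -/
def mkLaurentProd :
    (ℤ_[2][T;T⁻¹] × ℤ_[2][T;T⁻¹]) × ((ZMod 2)[T;T⁻¹] × (ZMod 2)[T;T⁻¹]) →ₗ[ℤ_[2][X]]
      (QZ × QZ) × (Qmod × Qmod) :=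
  let π₀ : ℤ_[2][T;T⁻¹] →ₗ[ℤ_[2][X]] QZ := Submodule.mkQ _
  let π₂ : (ZMod 2)[T;T⁻¹] →ₗ[ℤ_[2][X]] Qmod := (Submodule.mkQ _).restrictScalars ℤ_[2][X]
  (π₀.prodMap π₀).prodMap (π₂.prodMap π₂)

instance : IsLocalizedModule (.powers (Polynomial.X : ℤ_[2][X])) toLaurentProd :=
  inferInstanceAs (IsLocalizedModule _ (LinearMap.prodMap _ _))

theorem exact_toLaurentProd_mkLaurentProd : Function.Exact toLaurentProd mkLaurentProd :=
  have h₀ := (Algebra.linearMap ℤ_[2][X] ℤ_[2][T;T⁻¹]).exact_map_mkQ_range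
  have h₂ : Function.Exact
      ((Algebra.linearMap (ZMod 2)[X] (ZMod 2)[T;T⁻¹]).restrictScalars ℤ_[2][X])
      ((Submodule.mkQ _).restrictScalars ℤ_[2][X] : _ →ₗ[ℤ_[2][X]] Qmod) :=
    (Algebra.linearMap (ZMod 2)[X] (ZMod 2)[T;T⁻¹]).exact_map_mkQ_range
  exact_prodMap (exact_prodMap h₀ h₀) (exact_prodMap h₂ h₂)

theorem mkLaurentProd_surjective : Function.Surjective mkLaurentProd :=
  have h₀ := Submodule.Quotient.mk_surjective _
  have h₂ := Submodule.Quotient.mk_surjective _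
  Function.Surjective.prodMap (h₀.prodMap h₀) (h₂.prodMap h₂)

theorem X_smul_mk_koB (r : Rko) :
    (Polynomial.X : ℤ_[2][X]) • LocalizedModule.mk r ⟨koB, Submonoid.mem_powers koB⟩ =
      locMap koB Rko r := by
  rw [← algebraMap_smul Rko, algebraMap_X_eq_koB, LocalizedModule.smul'_mk]
  exact LocalizedModule.mk_cancel ⟨koB, Submonoid.mem_powers koB⟩ r

theorem X_smul_toLaurent_zmod_mul_T (p : (ZMod 2)[X]) :
    (Polynomial.X : ℤ_[2][X]) • (p.toLaurent * LaurentPolynomial.T (-1)) = p.toLaurent := by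
  rw [← algebraMap_smul (ZMod 2)[X], algebraMap_zmod_X, X_smul_toLaurent_mul_T]

theorem X_smul_toLaurentProd (a b : ℤ_[2][X]) (c d : (ZMod 2)[X]) :
    (Polynomial.X : ℤ_[2][X]) •
      ((a.toLaurent * LaurentPolynomial.T (-1), b.toLaurent * LaurentPolynomial.T (-1)),
        (c.toLaurent * LaurentPolynomial.T (-1), d.toLaurent * LaurentPolynomial.T (-1))) =
      toLaurentProd ((a, b), (c, d)) :=
  Prod.ext (Prod.ext (X_smul_toLaurent_mul_T a) (X_smul_toLaurent_mul_T b))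
    (Prod.ext (X_smul_toLaurent_zmod_mul_T c) (X_smul_toLaurent_zmod_mul_T d))

theorem exists_cokLoc_linearEquiv
    (e : Rko ≃ₗ[ℤ_[2][X]] (ℤ_[2][X] × ℤ_[2][X]) × ((ZMod 2)[X] × (ZMod 2)[X])) :
    ∃ E : CokLoc koB Rko ≃ₗ[ℤ_[2][X]] (QZ × QZ) × (Qmod × Qmod), ∀ {r a b c d},
      e r = ((a, b), (c, d)) →
      E (Submodule.Quotient.mk (LocalizedModule.mk r ⟨koB, Submonoid.mem_powers _⟩)) =
        ((Submodule.Quotient.mk (a.toLaurent * LaurentPolynomial.T (-1)),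
            Submodule.Quotient.mk (b.toLaurent * LaurentPolynomial.T (-1))),
          (Submodule.Quotient.mk (c.toLaurent * LaurentPolynomial.T (-1)),
            Submodule.Quotient.mk (d.toLaurent * LaurentPolynomial.T (-1)))) := by
  obtain ⟨E, hE⟩ := exists_linearEquiv_of_exact_of_isLocalizedModule
    (.powers (Polynomial.X : ℤ_[2][X])) exact_locMap_mkCokLoc mkCokLoc_surjective
    exact_toLaurentProd_mkLaurentProd mkLaurentProd_surjective e
  refine ⟨E, fun {r a b c d} h => ?_⟩
  have hX := X_smul_toLaurentProd a b c d
  rw [← h] at hX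
  exact hE ⟨Polynomial.X, Submonoid.mem_powers _⟩ r _ _ (X_smul_mk_koB r) hX

/-- `B` is a nonzerodivisor on `R_ko`, and the cokernel of the localization map
`R_ko → (R_ko)_B` is isomorphic as a `ℤ₂[B]`-module to
`(ℤ₂[B,B⁻¹]/ℤ₂[B])² ⊕ ((ℤ/2)[B,B⁻¹]/(ℤ/2)[B])²`, the two pairs of summands being
generated by the images of `1/B`, `A/B` and `η/B`, `η²/B` respectively. -/
theorem Rko_cokLoc_B :
    koB ∈ nonZeroDivisors Rko ∧
    ∃ e : CokLoc koB Rko ≃ₗ[Polynomial ℤ_[2]] (QZ × QZ) × (Qmod × Qmod),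
      e (Submodule.Quotient.mk
          (LocalizedModule.mk (1 : Rko) ⟨koB, Submonoid.mem_powers _⟩)) =
        ((Submodule.Quotient.mk (LaurentPolynomial.T (-1)), 0), (0, 0)) ∧
      e (Submodule.Quotient.mk
          (LocalizedModule.mk koA ⟨koB, Submonoid.mem_powers _⟩)) =
        ((0, Submodule.Quotient.mk (LaurentPolynomial.T (-1))), (0, 0)) ∧
      e (Submodule.Quotient.mk
          (LocalizedModule.mk koEta ⟨koB, Submonoid.mem_powers _⟩)) =
        ((0, 0), (Submodule.Quotient.mk (LaurentPolynomial.T (-1)), 0)) ∧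
      e (Submodule.Quotient.mk
          (LocalizedModule.mk (koEta ^ 2) ⟨koB, Submonoid.mem_powers _⟩)) =
        ((0, 0), (0, Submodule.Quotient.mk (LaurentPolynomial.T (-1)))) := by
  obtain ⟨e, he_one, he_A, he_eta, he_eta_sq⟩ := exists_Rko_linearEquiv
  obtain ⟨E, hE⟩ := exists_cokLoc_linearEquiv e
  refine ⟨koB_mem_nonZeroDivisors, E, ?_, ?_, ?_, ?_⟩
  · simpa using hE he_one
  · simpa using hE he_A
  · simpa using hE he_eta
  · simpa using hE he_eta_sq

end
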